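/- Let u : ℝ² → ℝ² be a continuously differentiable vector field with compact support, and let c ∈ ℝ² be a constant vector. Then b_emac(u,u,c) = 0; that is, ∫_{ℝ²} (2D(u)u)·c + (∇·u)(u·c) dx = 0. -/

import Mathlib

open MeasureTheory RealInnerProductSpace

noncomputable section

abbrev E2 := EuclideanSpace ℝ (Fin 2)

/-- divergence of a vector field on ℝ² -/
def dvg (u : E2 → E2) (x : E2) : ℝ :=
  ∑ i, fderiv ℝ u x (EuclideanSpace.single i 1) i

/-- convective trilinear form  b_conv(u,v,w) = ∫ ((u·∇)v)·w -/
def bConv (u v w : E2 → E2) : ℝ :=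
  ∫ x, ⟪fderiv ℝ v x (u x), w x⟫

/-- EMAC trilinear form  b_emac(u,v,w) = ∫ (2D(u)v)·w + (∇·u)(v·w),
where (2D(u)v)·w = (∇u v)·w + (∇u w)·v. -/
def bEmac (u v w : E2 → E2) : ℝ :=
  ∫ x, (⟪fderiv ℝ u x (v x), w x⟫ + ⟪fderiv ℝ u x (w x), v x⟫
    + dvg u x * ⟪v x, w x⟫)

/-- L² norm -/
def l2Norm {F : Type*} [NormedAddCommGroup F] (f : E2 → F) : ℝ :=
  (∫ x, ‖f x‖ ^ 2) ^ ((1 : ℝ) / 2)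

/-- H¹ norm -/
def h1Norm (f : E2 → E2) : ℝ := l2Norm f + l2Norm (fderiv ℝ f)

/-- H² norm -/
def h2Norm (f : E2 → E2) : ℝ :=
  l2Norm f + l2Norm (fderiv ℝ f) + l2Norm (fderiv ℝ (fderiv ℝ f))

/-- rotational field φ(x₁,x₂) = (−x₂, x₁) -/
def phi : E2 → E2 := fun x => (WithLp.equiv 2 (Fin 2 → ℝ)).symm ![-x 1, x 0]

/-!
The integrand of `b_emac(u, u, c)` is the divergence of the momentum flux `(u·c) u + ½ ‖u‖² c`:
the first summand contributes `((u·∇)u)·c + (∇·u)(u·c)` and the second `((c·∇)u)·u`. If `u` and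
`∇u` are square integrable, then the flux and its derivative are integrable. Integrating by parts
against the constant `1` shows that the derivative has integral zero as an operator-valued
function, and the trace, being linear, commutes with the integral.
-/

section IntegralDerivative

variable {E F : Type*} [NormedAddCommGroup E] [NormedSpace ℝ E] [FiniteDimensional ℝ E]
  [MeasurableSpace E] [BorelSpace E] [NormedAddCommGroup F] [NormedSpace ℝ F]
  {μ : Measure E} [μ.IsAddHaarMeasure]

lemma integral_fderiv_apply_eq_zero {f : E → F} (hd : Differentiable ℝ f) (hf : Integrable f μ)
    {v : E} (hf' : Integrable (fun x ↦ fderiv ℝ f x v) μ) :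
    ∫ x, fderiv ℝ f x v ∂μ = 0 := by
  simpa using integral_smul_fderiv_eq_neg_fderiv_smul_of_integrable (μ := μ)
    (f := fun _ ↦ (1 : ℝ)) (g := f) (v := v) (by simp) (by simpa using hf') (by simpa using hf)
    (fun _ _ ↦ differentiableAt_const 1) (fun x _ ↦ hd x)

lemma integral_fderiv_eq_zero {f : E → F} (hd : Differentiable ℝ f) (hf : Integrable f μ)
    (hf' : Integrable (fderiv ℝ f) μ) : ∫ x, fderiv ℝ f x ∂μ = 0 := by
  ext v
  rw [ContinuousLinearMap.integral_apply hf' v,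
    integral_fderiv_apply_eq_zero hd hf (hf'.apply_continuousLinearMap v), zero_apply]

/-- The divergence of a vector field on a finite-dimensional space, encoded basis-free as the trace
of its derivative. In infinite dimensions `LinearMap.trace`, and hence `divergence`, is zero. -/
def divergence (V : E → E) (x : E) : ℝ :=
  LinearMap.trace ℝ E (fderiv ℝ V x)

lemma integral_divergence_eq_zero {V : E → E} (hd : Differentiable ℝ V) (hV : Integrable V μ)
    (hV' : Integrable (fderiv ℝ V) μ) : ∫ x, divergence V x ∂μ = 0 := by
  let traceCLM : (E →L[ℝ] E) →L[ℝ] ℝ :=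
    (LinearMap.trace ℝ E ∘ₗ ContinuousLinearMap.coeLM ℝ).toContinuousLinearMap
  calc ∫ x, divergence V x ∂μ = traceCLM (∫ x, fderiv ℝ V x ∂μ) :=
        traceCLM.integral_comp_comm hV'
    _ = 0 := by rw [integral_fderiv_eq_zero hd hV hV', map_zero]

end IntegralDerivative

section MomentumFlux

variable {α E G : Type*} [NormedAddCommGroup E] [InnerProductSpace ℝ E]
  [NormedAddCommGroup G] [NormedSpace ℝ G]

/-- The EMAC momentum flux of `u` in direction `c`: the tensor `u ⊗ u + ½ ‖u‖² I` applied to `c`.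
Its divergence is the integrand of `bEmac u u fun _ ↦ c`. -/
def momentumFlux (u : α → E) (c : E) (x : α) : E :=
  ⟪u x, c⟫ • u x + (‖u x‖ ^ 2 / 2) • c

/-- The derivative of `momentumFlux u c` at a point where `u` has value `a` and derivative `A`. -/
def momentumFluxFDeriv (a : E) (A : G →L[ℝ] E) (c : E) : G →L[ℝ] E :=
  ⟪a, c⟫ • A + (innerSL ℝ c ∘L A).smulRight a + (innerSL ℝ a ∘L A).smulRight c

lemma hasFDerivAt_momentumFlux {u : G → E} {A : G →L[ℝ] E} {x : G}
    (hu : HasFDerivAt u A x) (c : E) :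
    HasFDerivAt (momentumFlux u c) (momentumFluxFDeriv (u x) A c) x := by
  have hasFDerivAt_inner : HasFDerivAt (fun y ↦ ⟪u y, c⟫) (innerSL ℝ c ∘L A) x := by
    simpa only [Function.comp_def, innerSL_apply_apply, real_inner_comm] using
      (innerSL ℝ c).hasFDerivAt.comp x hu
  have hasFDerivAt_half_norm_sq :
      HasFDerivAt (fun y ↦ ‖u y‖ ^ 2 / 2) (innerSL ℝ (u x) ∘L A) x := by
    simpa only [div_eq_inv_mul] using
      (hu.norm_sq.const_mul 2⁻¹).congr_fderiv (by ext v; simp)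
  exact (hasFDerivAt_inner.smul hu).add (hasFDerivAt_half_norm_sq.smul_const c)

lemma norm_momentumFlux_le (u : α → E) (c : E) (x : α) :
    ‖momentumFlux u c x‖ ≤ 3 / 2 * ‖c‖ * ‖u x‖ ^ 2 := by
  calc ‖momentumFlux u c x‖ ≤ ‖⟪u x, c⟫‖ * ‖u x‖ + ‖u x‖ ^ 2 / 2 * ‖c‖ := by
        refine (norm_add_le _ _).trans_eq ?_
        rw [norm_smul, norm_smul, Real.norm_of_nonneg (by positivity : 0 ≤ ‖u x‖ ^ 2 / 2)]
    _ ≤ ‖u x‖ * ‖c‖ * ‖u x‖ + ‖u x‖ ^ 2 / 2 * ‖c‖ := by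
        gcongr
        exact norm_inner_le_norm _ _
    _ = 3 / 2 * ‖c‖ * ‖u x‖ ^ 2 := by ring

lemma norm_momentumFluxFDeriv_le (a : E) (A : G →L[ℝ] E) (c : E) :
    ‖momentumFluxFDeriv a A c‖ ≤ 3 * ‖c‖ * (‖a‖ * ‖A‖) := by
  have norm_comp_le (b : E) : ‖innerSL ℝ b ∘L A‖ ≤ ‖b‖ * ‖A‖ := by
    simpa only [innerSL_apply_norm] using (innerSL ℝ b).opNorm_comp_le A
  calc ‖momentumFluxFDeriv a A c‖
      ≤ ‖⟪a, c⟫‖ * ‖A‖ + ‖innerSL ℝ c ∘L A‖ * ‖a‖ + ‖innerSL ℝ a ∘L A‖ * ‖c‖ := by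
        refine norm_add₃_le.trans_eq ?_
        simp only [norm_smul, ContinuousLinearMap.norm_smulRight_apply]
    _ ≤ ‖a‖ * ‖c‖ * ‖A‖ + ‖c‖ * ‖A‖ * ‖a‖ + ‖a‖ * ‖A‖ * ‖c‖ := by
        gcongr
        exacts [norm_inner_le_norm _ _, norm_comp_le c, norm_comp_le a]
    _ = 3 * ‖c‖ * (‖a‖ * ‖A‖) := by ring

lemma continuous_momentumFluxFDeriv (c : E) :
    Continuous (Function.uncurry fun (a : E) (A : G →L[ℝ] E) ↦ momentumFluxFDeriv a A c) := by
  unfold momentumFluxFDeriv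
  fun_prop

lemma integrable_momentumFlux [MeasurableSpace α] {μ : Measure α} {u : α → E} (hu : MemLp u 2 μ)
    (c : E) : Integrable (momentumFlux u c) μ := by
  have hu_meas : AEStronglyMeasurable u μ := hu.aestronglyMeasurable
  have flux_meas : AEStronglyMeasurable (momentumFlux u c) μ := by
    unfold momentumFlux
    fun_prop
  exact ((hu.integrable_norm_pow two_ne_zero).const_mul (3 / 2 * ‖c‖)).mono' flux_meas
    (.of_forall (norm_momentumFlux_le u c))

lemma integrable_fderiv_momentumFlux [MeasurableSpace G] {μ : Measure G} {u : G → E}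
    (hd : Differentiable ℝ u) (hu : MemLp u 2 μ) (hu' : MemLp (fderiv ℝ u) 2 μ) (c : E) :
    Integrable (fderiv ℝ (momentumFlux u c)) μ := by
  have fderiv_flux : fderiv ℝ (momentumFlux u c) =
      fun x ↦ momentumFluxFDeriv (u x) (fderiv ℝ u x) c :=
    funext fun x ↦ (hasFDerivAt_momentumFlux (hd x).hasFDerivAt c).fderiv
  have fderiv_flux_meas :
      AEStronglyMeasurable (fun x ↦ momentumFluxFDeriv (u x) (fderiv ℝ u x) c) μ :=
    (continuous_momentumFluxFDeriv c).comp_aestronglyMeasurable₂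
      hu.aestronglyMeasurable hu'.aestronglyMeasurable
  rw [fderiv_flux]
  exact ((hu.norm.integrable_mul hu'.norm).const_mul (3 * ‖c‖)).mono' fderiv_flux_meas
    (.of_forall fun x ↦ norm_momentumFluxFDeriv_le (u x) (fderiv ℝ u x) c)

lemma divergence_momentumFlux [FiniteDimensional ℝ E] {u : E → E} {x : E}
    (hu : DifferentiableAt ℝ u x) (c : E) :
    divergence (momentumFlux u c) x =
      ⟪fderiv ℝ u x (u x), c⟫ + ⟪fderiv ℝ u x c, u x⟫ + divergence u x * ⟪u x, c⟫ := by
  calc divergence (momentumFlux u c) x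
      = LinearMap.trace ℝ E (momentumFluxFDeriv (u x) (fderiv ℝ u x) c) := by
        rw [divergence, (hasFDerivAt_momentumFlux hu.hasFDerivAt c).fderiv]
    _ = ⟪u x, c⟫ * divergence u x + ⟪c, fderiv ℝ u x (u x)⟫ + ⟪u x, fderiv ℝ u x c⟫ := by
        simp [momentumFluxFDeriv, divergence]
    _ = _ := by
        rw [real_inner_comm c (fderiv ℝ u x (u x)), real_inner_comm (u x) (fderiv ℝ u x c)]
        ring

theorem bEmac_const_eq_zero_general [FiniteDimensional ℝ E] [MeasurableSpace E] [BorelSpace E]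
    {μ : Measure E} [μ.IsAddHaarMeasure] {u : E → E} (hd : Differentiable ℝ u)
    (hu : MemLp u 2 μ) (hu' : MemLp (fderiv ℝ u) 2 μ) (c : E) :
    ∫ x, (⟪fderiv ℝ u x (u x), c⟫ + ⟪fderiv ℝ u x c, u x⟫ + divergence u x * ⟪u x, c⟫) ∂μ
      = 0 := by
  have hd_flux : Differentiable ℝ (momentumFlux u c) := fun x ↦
    (hasFDerivAt_momentumFlux (hd x).hasFDerivAt c).differentiableAt
  simpa only [divergence_momentumFlux (hd _)] using integral_divergence_eq_zero hd_flux
    (integrable_momentumFlux hu c) (integrable_fderiv_momentumFlux hd hu hu' c)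

end MomentumFlux

lemma dvg_eq_divergence (u : E2 → E2) (x : E2) : dvg u x = divergence u x := by
  simp [dvg, divergence, LinearMap.trace_eq_sum_inner _ (EuclideanSpace.basisFun (Fin 2) ℝ),
    EuclideanSpace.inner_single_left]

theorem bEmac_const_eq_zero
    (u : E2 → E2) (hu : ContDiff ℝ 1 u) (hcu : HasCompactSupport u)
    (c : E2) :
    bEmac u u (fun _ => c) = 0 := by
  have hu_L2 : MemLp u 2 := hu.continuous.memLp_of_hasCompactSupport hcu
  have hu'_L2 : MemLp (fderiv ℝ u) 2 :=
    (hu.continuous_fderiv one_ne_zero).memLp_of_hasCompactSupport (hcu.fderiv ℝ)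
  simpa only [bEmac, dvg_eq_divergence] using
    bEmac_const_eq_zero_general (hu.differentiable one_ne_zero) hu_L2 hu'_L2 c
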